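/- Fix real κ > 0 and η > 0, and set c = 3π/2. There exist l₀ > κ and C > 0 (depending only on η and κ) such that for all l > l₀ and all w ∈ ℂ with w ≠ 0, writing φ for the principal argument of w, r = |w|², and φ₀ = (c/2)·l⁻¹·r^{−1/2}·log(l + r): (i) if −π + φ₀ < φ < −φ₀ then |D̂_l(w) − D₁(w)| < C·|D₁(w)|/log(l + r), where D₁(w) = −i·e^{2ilw}·g_{η/κ}(2κw)/(2η²w²); (ii) if π/2 ≤ φ ≤ π − φ₀ then |D̂_l(w) − D₂(w)| < C·|D₂(w)|/log(l + r), where D₂(w) = ((2ηw + i)² + e^{4iκw})/(4η²w²). (log denotes the natural logarithm.) -/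

import Mathlib

/-!
The determinant splits exactly as `D̂_l = D₁ + D₂`, so each estimate compares `D₁` with `D₂`. Put
`R = l + |w|²`. Since `sin θ ≥ (2/π) φ₀` whenever `φ₀ ≤ θ ≤ π - φ₀`, both sectors lie in the region
`l |Im w| ≥ (3/2) log R`, where the factor `e^{2ilw}` of `D₁` has modulus at least `R³` in the lower
and at most `R⁻³` in the upper half-plane. The other exponentials have rate `O(κ)` and are absorbed
for `l ≥ 6κ`, and polynomial factors are `O(R)`. Cancellation is controlled by `|g_b(z)| ≥ |Im z|`
and, for `Im w ≥ 0`, by factoring the numerator of `D₂` as a sum of two squares, which gives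
`|D₂(w)| ≥ (Im w / |w|)²`.
-/

open Real

/-- The resonance determinant `D̂_l(w)` of the Hamiltonian
`p² + η⁻¹(δ_κ + δ_{−κ})` on `L²((−∞, l))` with a Dirichlet boundary condition
at `l`, in the variable `w = √z`. -/
noncomputable def Dhat (κ η l : ℝ) (w : ℂ) : ℂ :=
  1 + Complex.I * (1 - Complex.exp (2 * Complex.I * l * w) * Complex.cos (2 * κ * w)) / (η * w)
    - Complex.exp (Complex.I * (κ + l) * w) * Complex.sin ((κ - l) * w) * Complex.sin (2 * κ * w)
        / (η ^ 2 * w ^ 2)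

/-- `g_b(w) = sin(w) + b·w·cos(w)` -/
noncomputable def gb (b : ℝ) (w : ℂ) : ℂ :=
  Complex.sin w + (b : ℂ) * w * Complex.cos w

/-- `φ₀ = (c/2)·l⁻¹·r^{−1/2}·log(l + r)` with `c = 3π/2` and `r = |w|²`. -/
noncomputable def phi0 (l : ℝ) (w : ℂ) : ℝ :=
  ((3 * π / 2) / 2) * l⁻¹ * (‖w‖ ^ 2) ^ (-(1 : ℝ) / 2) *
    Real.log (l + ‖w‖ ^ 2)

/-- `D₁(w) = −i·e^{2ilw}·g_{η/κ}(2κw)/(2η²w²)` -/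
noncomputable def D1 (κ η l : ℝ) (w : ℂ) : ℂ :=
  -Complex.I * Complex.exp (2 * Complex.I * l * w) * gb (η / κ) (2 * κ * w) / (2 * η ^ 2 * w ^ 2)

/-- `D₂(w) = ((2ηw + i)² + e^{4iκw})/(4η²w²)` -/
noncomputable def D2 (κ η : ℝ) (w : ℂ) : ℂ :=
  ((2 * η * w + Complex.I) ^ 2 + Complex.exp (4 * Complex.I * κ * w)) / (4 * η ^ 2 * w ^ 2)

theorem exp_add_mul_I_mul_sin_sub (a b : ℂ) :
    Complex.exp ((a + b) * Complex.I) * Complex.sin (a - b)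
      = (Complex.exp (2 * b * Complex.I) - Complex.exp (2 * a * Complex.I)) * Complex.I / 2 := by
  have hb : Complex.exp ((a + b) * Complex.I) * Complex.exp (-(a - b) * Complex.I)
      = Complex.exp (2 * b * Complex.I) := by
    rw [← Complex.exp_add]; ring_nf
  have ha : Complex.exp ((a + b) * Complex.I) * Complex.exp ((a - b) * Complex.I)
      = Complex.exp (2 * a * Complex.I) := by
    rw [← Complex.exp_add]; ring_nf
  rw [Complex.sin, ← ha, ← hb]
  ring

theorem Dhat_eq_D1_add_D2 {κ η : ℝ} (hκ : κ ≠ 0) (hη : η ≠ 0) (l : ℝ) {w : ℂ} (hw : w ≠ 0) :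
    Dhat κ η l w = D1 κ η l w + D2 κ η w := by
  have hκ' : (κ : ℂ) ≠ 0 := Complex.ofReal_ne_zero.2 hκ
  have hη' : (η : ℂ) ≠ 0 := Complex.ofReal_ne_zero.2 hη
  have hfirst := exp_add_mul_I_mul_sin_sub (κ * w) (l * w)
  have hsecond := exp_add_mul_I_mul_sin_sub (2 * κ * w) 0
  rw [add_zero, sub_zero, mul_zero, zero_mul, Complex.exp_zero] at hsecond
  have hproduct : Complex.exp (Complex.I * (κ + l) * w) * Complex.sin ((κ - l) * w)
        * Complex.sin (2 * κ * w)
      = Complex.exp (2 * Complex.I * l * w) * Complex.sin (2 * κ * w) * Complex.I / 2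
        + (1 - Complex.exp (4 * Complex.I * κ * w)) / 4 := by
    ring_nf at hfirst hsecond ⊢
    rw [hfirst]
    linear_combination (-Complex.I / 2) * hsecond
      + (-(1 - Complex.exp (κ * w * Complex.I * 4)) / 4) * Complex.I_sq
  rw [Dhat, D1, D2, gb, hproduct]
  push_cast
  field_simp
  linear_combination (-2 : ℂ) * Complex.I_sq

theorem norm_exp_mul_I (z : ℂ) : ‖Complex.exp (z * Complex.I)‖ = Real.exp (-z.im) := by
  rw [Complex.norm_exp, Complex.mul_I_re]

theorem gb_neg (b : ℝ) (z : ℂ) : gb b (-z) = -gb b z := by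
  rw [gb, gb, Complex.sin_neg, Complex.cos_neg]
  ring

theorem two_mul_gb (b : ℝ) (z : ℂ) :
    2 * gb b z = Complex.exp (z * Complex.I) * (b * z - Complex.I)
      + Complex.exp (-z * Complex.I) * (b * z + Complex.I) := by
  rw [gb, Complex.sin, Complex.cos]
  ring

theorem norm_gb_le (b : ℝ) (z : ℂ) : ‖gb b z‖ ≤ Real.exp |z.im| * (|b| * ‖z‖ + 1) := by
  have hsub : ‖b * z - Complex.I‖ ≤ |b| * ‖z‖ + 1 := by
    simpa using norm_sub_le (b * z) Complex.I
  have hadd : ‖b * z + Complex.I‖ ≤ |b| * ‖z‖ + 1 := by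
    simpa using norm_add_le (b * z) Complex.I
  have htwo : ‖2 * gb b z‖ ≤ Real.exp |z.im| * (|b| * ‖z‖ + 1)
      + Real.exp |z.im| * (|b| * ‖z‖ + 1) := by
    rw [two_mul_gb]
    refine norm_add_le_of_le ?_ ?_
    · rw [norm_mul, norm_exp_mul_I]
      gcongr
      exact neg_le_abs _
    · rw [norm_mul, norm_exp_mul_I, Complex.neg_im, neg_neg]
      gcongr
      exact le_abs_self _
  rw [norm_mul, Complex.norm_two] at htwo
  linarith

theorem norm_add_I_le_norm_sub_I {z : ℂ} (hz : z.im ≤ 0) : ‖z + Complex.I‖ ≤ ‖z - Complex.I‖ := by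
  rw [Complex.norm_def, Complex.norm_def]
  refine Real.sqrt_le_sqrt ?_
  simp only [Complex.normSq_apply, Complex.add_re, Complex.add_im, Complex.sub_re, Complex.sub_im,
    Complex.I_re, Complex.I_im]
  linarith

theorem one_le_norm_sub_I {z : ℂ} (hz : z.im ≤ 0) : 1 ≤ ‖z - Complex.I‖ :=
  calc 1 ≤ -(z - Complex.I).im := by rw [Complex.sub_im, Complex.I_im]; linarith
    _ ≤ |(z - Complex.I).im| := neg_le_abs _
    _ ≤ ‖z - Complex.I‖ := Complex.abs_im_le_norm _

theorem sinh_abs_im_le_norm_gb {b : ℝ} (hb : 0 ≤ b) (z : ℂ) : Real.sinh |z.im| ≤ ‖gb b z‖ := by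
  wlog hz : z.im ≤ 0 generalizing z
  · simpa [gb_neg] using this (-z) (by rw [Complex.neg_im]; linarith)
  have hbz : (b * z).im ≤ 0 := by
    rw [Complex.im_ofReal_mul]
    exact mul_nonpos_of_nonneg_of_nonpos hb hz
  have htriangle : Real.exp (-z.im) * ‖b * z - Complex.I‖ - Real.exp z.im * ‖b * z + Complex.I‖
      ≤ 2 * ‖gb b z‖ := by
    have h := norm_sub_le_norm_add (Complex.exp (z * Complex.I) * (b * z - Complex.I))
      (Complex.exp (-z * Complex.I) * (b * z + Complex.I))
    rwa [← two_mul_gb, norm_mul, norm_mul, norm_mul, norm_exp_mul_I, norm_exp_mul_I,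
      Complex.norm_two, Complex.neg_im, neg_neg] at h
  have hexp : Real.exp z.im ≤ Real.exp (-z.im) := Real.exp_le_exp.2 (by linarith)
  rw [abs_of_nonpos hz, Real.sinh_eq, neg_neg]
  have : Real.exp (-z.im) - Real.exp z.im ≤ 2 * ‖gb b z‖ :=
    calc Real.exp (-z.im) - Real.exp z.im
        = (Real.exp (-z.im) - Real.exp z.im) * 1 := (mul_one _).symm
      _ ≤ (Real.exp (-z.im) - Real.exp z.im) * ‖b * z - Complex.I‖ :=
          mul_le_mul_of_nonneg_left (one_le_norm_sub_I hbz) (sub_nonneg.2 hexp)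
      _ = Real.exp (-z.im) * ‖b * z - Complex.I‖ - Real.exp z.im * ‖b * z - Complex.I‖ := by ring
      _ ≤ Real.exp (-z.im) * ‖b * z - Complex.I‖ - Real.exp z.im * ‖b * z + Complex.I‖ := by
          gcongr
          exact norm_add_I_le_norm_sub_I hbz
      _ ≤ 2 * ‖gb b z‖ := htriangle
  linarith

theorem abs_im_le_norm_gb {b : ℝ} (hb : 0 ≤ b) (z : ℂ) : |z.im| ≤ ‖gb b z‖ :=
  (Real.self_le_sinh_iff.2 (abs_nonneg _)).trans (sinh_abs_im_le_norm_gb hb z)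

theorem norm_D1 (κ η l : ℝ) (w : ℂ) :
    ‖D1 κ η l w‖ = Real.exp (-(2 * l * w.im)) * ‖gb (η / κ) (2 * κ * w)‖
      / (2 * η ^ 2 * ‖w‖ ^ 2) := by
  have hexp : ‖Complex.exp (2 * Complex.I * l * w)‖ = Real.exp (-(2 * l * w.im)) := by
    rw [show 2 * Complex.I * l * w = 2 * l * w * Complex.I by ring, norm_exp_mul_I]
    simp
  rw [D1, norm_div, norm_mul, norm_mul, norm_neg, Complex.norm_I, one_mul, hexp]
  simp

theorem norm_D1_le {κ η : ℝ} (hκ : 0 < κ) (hη : 0 ≤ η) (l : ℝ) (w : ℂ) :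
    ‖D1 κ η l w‖ ≤ Real.exp (2 * κ * |w.im| - 2 * l * w.im) * (2 * η * ‖w‖ + 1)
      / (2 * η ^ 2 * ‖w‖ ^ 2) := by
  have him : |(2 * κ * w : ℂ).im| = 2 * κ * |w.im| := by simp [abs_mul, abs_of_pos hκ]
  have hnorm : |η / κ| * ‖(2 * κ * w : ℂ)‖ = 2 * η * ‖w‖ := by
    rw [abs_of_nonneg (by positivity)]
    simp only [norm_mul, Complex.norm_ofNat, Complex.norm_real, norm_eq_abs, abs_of_pos hκ]
    field_simp
  have hg := norm_gb_le (η / κ) (2 * κ * w)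
  rw [him, hnorm] at hg
  rw [norm_D1, sub_eq_neg_add, Real.exp_add, mul_assoc (Real.exp _)]
  gcongr

theorem le_norm_D1 {κ η : ℝ} (hκ : 0 ≤ κ) (hη : 0 ≤ η) (l : ℝ) (w : ℂ) :
    κ * |w.im| * Real.exp (-(2 * l * w.im)) / (η ^ 2 * ‖w‖ ^ 2) ≤ ‖D1 κ η l w‖ := by
  have hg := abs_im_le_norm_gb (div_nonneg hη hκ) (2 * κ * w)
  have him : |(2 * κ * w : ℂ).im| = 2 * κ * |w.im| := by simp [abs_mul, abs_of_nonneg hκ]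
  rw [him] at hg
  calc κ * |w.im| * Real.exp (-(2 * l * w.im)) / (η ^ 2 * ‖w‖ ^ 2)
      = Real.exp (-(2 * l * w.im)) * (2 * κ * |w.im|) / (2 * η ^ 2 * ‖w‖ ^ 2) := by
        field_simp
    _ ≤ Real.exp (-(2 * l * w.im)) * ‖gb (η / κ) (2 * κ * w)‖ / (2 * η ^ 2 * ‖w‖ ^ 2) := by
        gcongr
    _ = ‖D1 κ η l w‖ := (norm_D1 κ η l w).symm

theorem norm_add_I_sq_add_sq_le (a e : ℂ) :
    ‖(a + Complex.I) ^ 2 + e ^ 2‖ ≤ (‖a‖ + 1) ^ 2 + ‖e‖ ^ 2 := by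
  refine (norm_add_le _ _).trans ?_
  rw [norm_pow, norm_pow]
  gcongr
  simpa using norm_add_le a Complex.I

theorem im_sq_le_norm_add_I_sq_add_sq {a e : ℂ} (ha : 0 ≤ a.im) (he : |e.re| ≤ 1) :
    a.im ^ 2 ≤ ‖(a + Complex.I) ^ 2 + e ^ 2‖ := by
  obtain ⟨he₁, he₂⟩ := abs_le.1 he
  have hfactor : (a + Complex.I) ^ 2 + e ^ 2
      = (a + Complex.I - Complex.I * e) * (a + Complex.I + Complex.I * e) := by
    linear_combination e ^ 2 * Complex.I_sq
  have hminus : a.im ≤ ‖a + Complex.I - Complex.I * e‖ := by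
    refine le_trans ?_ (Complex.im_le_norm _)
    rw [Complex.sub_im, Complex.add_im, Complex.I_im, Complex.I_mul_im]
    linarith
  have hplus : a.im ≤ ‖a + Complex.I + Complex.I * e‖ := by
    refine le_trans ?_ (Complex.im_le_norm _)
    rw [Complex.add_im, Complex.add_im, Complex.I_im, Complex.I_mul_im]
    linarith
  rw [hfactor, norm_mul, sq]
  gcongr

theorem norm_D2 (κ η : ℝ) (w : ℂ) :
    ‖D2 κ η w‖ = ‖(2 * η * w + Complex.I) ^ 2 + Complex.exp (2 * κ * w * Complex.I) ^ 2‖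
      / (4 * η ^ 2 * ‖w‖ ^ 2) := by
  have hexp : Complex.exp (4 * Complex.I * κ * w) = Complex.exp (2 * κ * w * Complex.I) ^ 2 := by
    rw [← Complex.exp_nat_mul]
    push_cast
    ring_nf
  rw [D2, norm_div, hexp]
  simp

theorem norm_D2_le (κ : ℝ) {η : ℝ} (hη : 0 ≤ η) (w : ℂ) :
    ‖D2 κ η w‖ ≤ ((2 * η * ‖w‖ + 1) ^ 2 + Real.exp (-(4 * κ * w.im))) / (4 * η ^ 2 * ‖w‖ ^ 2) := by
  have hnorm : ‖(2 * η * w : ℂ)‖ = 2 * η * ‖w‖ := by simp [abs_of_nonneg hη]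
  have hexp : ‖Complex.exp (2 * κ * w * Complex.I)‖ ^ 2 = Real.exp (-(4 * κ * w.im)) := by
    rw [norm_exp_mul_I, ← Real.exp_nat_mul]
    congr 1
    simp only [Complex.mul_im, Complex.mul_re, Complex.re_ofNat, Complex.ofReal_re,
      Complex.im_ofNat, Complex.ofReal_im, Nat.cast_ofNat]
    ring
  rw [norm_D2, ← hnorm, ← hexp]
  gcongr
  exact norm_add_I_sq_add_sq_le _ _

theorem le_norm_D2 {κ η : ℝ} (hκ : 0 ≤ κ) (hη : 0 < η) {w : ℂ} (hw : 0 ≤ w.im) :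
    w.im ^ 2 / ‖w‖ ^ 2 ≤ ‖D2 κ η w‖ := by
  have him : (2 * η * w : ℂ).im = 2 * η * w.im := by simp
  have hre : |(Complex.exp (2 * κ * w * Complex.I)).re| ≤ 1 := by
    refine (Complex.abs_re_le_norm _).trans ?_
    rw [norm_exp_mul_I, Real.exp_le_one_iff]
    have hrate : 0 ≤ 2 * κ * w.im := by positivity
    simpa using hrate
  have hnum := im_sq_le_norm_add_I_sq_add_sq (a := 2 * η * w) (by rw [him]; positivity) hre
  rw [him] at hnum
  calc w.im ^ 2 / ‖w‖ ^ 2 = (2 * η * w.im) ^ 2 / (4 * η ^ 2 * ‖w‖ ^ 2) := by field_simp; ring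
    _ ≤ _ := by gcongr
    _ = ‖D2 κ η w‖ := (norm_D2 κ η w).symm

theorem two_div_pi_mul_le_sin {a θ : ℝ} (ha : 0 ≤ a) (h₁ : a ≤ θ) (h₂ : θ ≤ π - a) :
    2 / π * a ≤ Real.sin θ := by
  wlog hθ : θ ≤ π / 2 generalizing θ
  · rw [← Real.sin_pi_sub]
    exact this (by linarith) (by linarith) (by linarith)
  calc 2 / π * a ≤ 2 / π * θ := by gcongr
    _ ≤ Real.sin θ := Real.mul_le_sin (ha.trans h₁) hθ

theorem phi0_eq (l : ℝ) (w : ℂ) :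
    phi0 l w = 3 * π / 4 * Real.log (l + ‖w‖ ^ 2) / (l * ‖w‖) := by
  have hrpow : (‖w‖ ^ 2) ^ (-(1 : ℝ) / 2) = ‖w‖⁻¹ := by
    rw [neg_div, Real.rpow_neg (by positivity), ← Real.sqrt_eq_rpow, Real.sqrt_sq (norm_nonneg w)]
  rw [phi0, hrpow]
  ring

theorem log_le_mul_norm_mul_sin {l θ : ℝ} (hl : 1 ≤ l) {w : ℂ} (hw : w ≠ 0)
    (h₁ : phi0 l w ≤ θ) (h₂ : θ ≤ π - phi0 l w) :
    3 / 2 * Real.log (l + ‖w‖ ^ 2) ≤ l * (‖w‖ * Real.sin θ) := by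
  have hlog : 0 ≤ Real.log (l + ‖w‖ ^ 2) := Real.log_nonneg (by nlinarith)
  have hphi : 0 ≤ phi0 l w := by rw [phi0_eq]; positivity
  calc 3 / 2 * Real.log (l + ‖w‖ ^ 2) = l * (‖w‖ * (2 / π * phi0 l w)) := by
        rw [phi0_eq]
        field_simp
        ring
    _ ≤ l * (‖w‖ * Real.sin θ) := by
        gcongr
        exact two_div_pi_mul_le_sin hphi h₁ h₂

theorem mul_add_one_le_mul_sqrt {a x R : ℝ} (ha : 0 ≤ a) (hx : x ^ 2 ≤ R) (hR : 1 ≤ R) :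
    a * x + 1 ≤ (a + 1) * √R := by
  rw [add_mul, one_mul]
  gcongr
  · exact Real.le_sqrt_of_sq_le hx
  · exact Real.one_le_sqrt.2 hR

theorem sq_add_exp_le_mul_exp_div {a x R s t : ℝ} (ha : 0 ≤ a) (hx₀ : 0 ≤ x) (hx : x ^ 2 ≤ R)
    (hR : 1 ≤ R) (ht : 2 * Real.log R ≤ t) (hst : s + Real.log R ≤ t) :
    (a * x + 1) ^ 2 + Real.exp s ≤ ((a + 1) ^ 2 + 1) * (Real.exp t / R) := by
  have hR₀ : 0 < R := by linarith
  have hdiv : Real.exp t / R = Real.exp (t - Real.log R) := by rw [Real.exp_sub, Real.exp_log hR₀]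
  rw [hdiv, add_mul, one_mul]
  refine add_le_add ?_ (Real.exp_le_exp.2 (by linarith))
  calc (a * x + 1) ^ 2 ≤ ((a + 1) * √R) ^ 2 := by
        gcongr
        exact mul_add_one_le_mul_sqrt ha hx hR
    _ = (a + 1) ^ 2 * Real.exp (Real.log R) := by
        rw [mul_pow, Real.sq_sqrt hR₀.le, Real.exp_log hR₀]
    _ ≤ (a + 1) ^ 2 * Real.exp (t - Real.log R) := by
        gcongr
        linarith

theorem exp_neg_mul_le_div_sq {a x R t : ℝ} (ha : 0 ≤ a) (hx : x ^ 2 ≤ R) (hR : 1 ≤ R)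
    (ht : 5 / 2 * Real.log R ≤ t) :
    Real.exp (-t) * (a * x + 1) ≤ (a + 1) / R ^ 2 := by
  have hR₀ : 0 < R := by linarith
  have hexp : √R * R ^ 2 ≤ Real.exp t :=
    calc √R * R ^ 2 = Real.exp (Real.log R / 2 + (2 : ℕ) * Real.log R) := by
          rw [Real.exp_add, Real.exp_half, Real.exp_nat_mul, Real.exp_log hR₀]
      _ ≤ Real.exp t := by
          gcongr
          push_cast
          linarith
  rw [Real.exp_neg, inv_mul_le_iff₀ (Real.exp_pos t)]
  calc a * x + 1 ≤ (a + 1) * √R := mul_add_one_le_mul_sqrt ha hx hR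
    _ = √R * R ^ 2 * ((a + 1) / R ^ 2) := by field_simp
    _ ≤ Real.exp t * ((a + 1) / R ^ 2) := by gcongr

theorem norm_D2_lt_of_log_le_mul_neg_im {κ η l : ℝ} (hκ : 0 < κ) (hη : 0 < η) (hl : 1 < l)
    (hκl : 3 * κ ≤ l) {w : ℂ} (hw : w ≠ 0)
    (hy : 3 / 2 * Real.log (l + ‖w‖ ^ 2) ≤ l * -w.im) :
    ‖D2 κ η w‖ < ((2 * η + 1) ^ 2 + 1) / (6 * κ) * ‖D1 κ η l w‖ / Real.log (l + ‖w‖ ^ 2) := by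
  have hw₀ : 0 < ‖w‖ := norm_pos_iff.2 hw
  obtain ⟨R, hR⟩ : ∃ R, R = l + ‖w‖ ^ 2 := ⟨_, rfl⟩
  obtain ⟨y, hwy⟩ : ∃ y, w.im = -y := ⟨-w.im, (neg_neg _).symm⟩
  rw [hwy, neg_neg] at hy
  rw [← hR] at hy ⊢
  have hlR : l < R := by rw [hR]; exact lt_add_of_pos_right l (by positivity)
  have hlog : 0 < Real.log R := Real.log_pos (hl.trans hlR)
  have hy₀ : 0 < y := pos_of_mul_pos_right (by linarith) (by linarith : (0 : ℝ) ≤ l)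
  have hκy : 3 * κ * y ≤ l * y := by gcongr
  have hnum : (2 * η * ‖w‖ + 1) ^ 2 + Real.exp (4 * κ * y)
      ≤ ((2 * η + 1) ^ 2 + 1) * (Real.exp (2 * l * y) / R) :=
    sq_add_exp_le_mul_exp_div (by positivity) hw₀.le (by linarith) (by linarith) (by linarith)
      (by linarith)
  have hinv : 1 / R < 2 / 3 * y / Real.log R := by
    rw [div_lt_div_iff₀ (by linarith) hlog]
    nlinarith
  have hD1 := le_norm_D1 hκ.le hη.le l w
  have hD2 := norm_D2_le κ hη.le w
  rw [hwy, abs_neg, abs_of_pos hy₀, mul_neg, neg_neg] at hD1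
  rw [hwy, mul_neg, neg_neg] at hD2
  calc ‖D2 κ η w‖
      ≤ ((2 * η + 1) ^ 2 + 1) * (Real.exp (2 * l * y) / R) / (4 * η ^ 2 * ‖w‖ ^ 2) :=
        hD2.trans (by gcongr)
    _ = ((2 * η + 1) ^ 2 + 1) * (Real.exp (2 * l * y) * (1 / R)) / (4 * η ^ 2 * ‖w‖ ^ 2) := by
        rw [mul_one_div]
    _ < ((2 * η + 1) ^ 2 + 1) * (Real.exp (2 * l * y) * (2 / 3 * y / Real.log R))
          / (4 * η ^ 2 * ‖w‖ ^ 2) := by gcongr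
    _ = ((2 * η + 1) ^ 2 + 1) / (6 * κ)
          * (κ * y * Real.exp (2 * l * y) / (η ^ 2 * ‖w‖ ^ 2)) / Real.log R := by
        field_simp
        norm_num
    _ ≤ ((2 * η + 1) ^ 2 + 1) / (6 * κ) * ‖D1 κ η l w‖ / Real.log R := by gcongr

theorem norm_D1_lt_of_log_le_mul_im {κ η l : ℝ} (hκ : 0 < κ) (hη : 0 < η) (hl : 3 ≤ l)
    (hκl : 6 * κ ≤ l) {w : ℂ} (hw : w ≠ 0)
    (hy : 3 / 2 * Real.log (l + ‖w‖ ^ 2) ≤ l * w.im) :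
    ‖D1 κ η l w‖ < (2 * η + 1) / (2 * η ^ 2) * ‖D2 κ η w‖ / Real.log (l + ‖w‖ ^ 2) := by
  obtain ⟨R, hR⟩ : ∃ R, R = l + ‖w‖ ^ 2 := ⟨_, rfl⟩
  rw [← hR] at hy ⊢
  have hlR : l < R := by rw [hR]; exact lt_add_of_pos_right l (by positivity)
  have hR₀ : 0 < R := by linarith
  have hlog : 1 < Real.log R := by
    rw [Real.lt_log_iff_exp_lt hR₀]
    linarith [Real.exp_one_lt_three]
  have hlog₀ : 0 < Real.log R := by linarith
  have hy₀ : 0 < w.im := pos_of_mul_pos_right (by linarith) (by linarith : (0 : ℝ) ≤ l)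
  have hκy : 6 * κ * w.im ≤ l * w.im := by gcongr
  have hnum : Real.exp (-(2 * l * w.im - 2 * κ * w.im)) * (2 * η * ‖w‖ + 1)
      ≤ (2 * η + 1) / R ^ 2 :=
    exp_neg_mul_le_div_sq (by positivity) (by linarith) (by linarith) (by linarith)
  have hlog_lt : Real.log R < R * w.im :=
    calc Real.log R < l * w.im := by linarith
      _ < R * w.im := by gcongr
  have hinv : 1 / R ^ 2 < w.im ^ 2 / Real.log R := by
    rw [div_lt_div_iff₀ (by positivity) hlog₀]
    calc 1 * Real.log R < Real.log R * Real.log R := by gcongr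
      _ < (R * w.im) * (R * w.im) := by gcongr
      _ = w.im ^ 2 * R ^ 2 := by ring
  have hD1 := norm_D1_le hκ hη.le l w
  rw [abs_of_pos hy₀, ← neg_sub] at hD1
  calc ‖D1 κ η l w‖ ≤ (2 * η + 1) / R ^ 2 / (2 * η ^ 2 * ‖w‖ ^ 2) := hD1.trans (by gcongr)
    _ = (2 * η + 1) * (1 / R ^ 2) / (2 * η ^ 2 * ‖w‖ ^ 2) := by rw [mul_one_div]
    _ < (2 * η + 1) * (w.im ^ 2 / Real.log R) / (2 * η ^ 2 * ‖w‖ ^ 2) := by gcongr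
    _ = (2 * η + 1) / (2 * η ^ 2) * (w.im ^ 2 / ‖w‖ ^ 2) / Real.log R := by field_simp
    _ ≤ (2 * η + 1) / (2 * η ^ 2) * ‖D2 κ η w‖ / Real.log R := by
        gcongr
        exact le_norm_D2 hκ.le hη hy₀.le

theorem stmt6_general (κ η : ℝ) (hκ : 0 < κ) (hη : 0 < η) :
    ∃ l₀ > κ, ∃ C > (0 : ℝ), ∀ l > l₀, ∀ w : ℂ, w ≠ 0 →
      (((-π + phi0 l w ≤ Complex.arg w ∧ Complex.arg w ≤ -phi0 l w) →
        ‖Dhat κ η l w - D1 κ η l w‖ <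
          C * ‖D1 κ η l w‖ / Real.log (l + ‖w‖ ^ 2)) ∧
       ((phi0 l w ≤ Complex.arg w ∧ Complex.arg w ≤ π - phi0 l w) →
        ‖Dhat κ η l w - D2 κ η w‖ <
          C * ‖D2 κ η w‖ / Real.log (l + ‖w‖ ^ 2))) := by
  refine ⟨6 * κ + 3, by linarith,
    max (((2 * η + 1) ^ 2 + 1) / (6 * κ)) ((2 * η + 1) / (2 * η ^ 2)),
    lt_max_of_lt_left (by positivity), fun l hl w hw => ?_⟩
  have hlog : 0 ≤ Real.log (l + ‖w‖ ^ 2) := Real.log_nonneg (by nlinarith)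
  rw [Dhat_eq_D1_add_D2 hκ.ne' hη.ne' l hw, add_sub_cancel_left, add_sub_cancel_right]
  constructor
  · rintro ⟨h₁, h₂⟩
    have him : 3 / 2 * Real.log (l + ‖w‖ ^ 2) ≤ l * -w.im := by
      rw [← Complex.norm_mul_sin_arg w, ← mul_neg, ← Real.sin_neg]
      exact log_le_mul_norm_mul_sin (by linarith) hw (by linarith) (by linarith)
    refine (norm_D2_lt_of_log_le_mul_neg_im hκ hη (by linarith) (by linarith) hw him).trans_le ?_
    gcongr
    exact le_max_left _ _
  · rintro ⟨h₁, h₂⟩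
    have him : 3 / 2 * Real.log (l + ‖w‖ ^ 2) ≤ l * w.im := by
      rw [← Complex.norm_mul_sin_arg w]
      exact log_le_mul_norm_mul_sin (by linarith) hw h₁ h₂
    refine (norm_D1_lt_of_log_le_mul_im hκ hη (by linarith) (by linarith) hw him).trans_le ?_
    gcongr
    exact le_max_right _ _

/-- Approximation of `D̂_l` by `D₁` in the lower sector and by `D₂` in the
upper sector, with relative errors `O(1/log(l + r))`. -/
theorem stmt6 (κ η : ℝ) (hκ : 0 < κ) (hη : 0 < η) :
    ∃ l₀ > κ, ∃ C > (0 : ℝ), ∀ l > l₀, ∀ w : ℂ, w ≠ 0 →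
      (((-π + phi0 l w < Complex.arg w ∧ Complex.arg w < -phi0 l w) →
        ‖Dhat κ η l w - D1 κ η l w‖ <
          C * ‖D1 κ η l w‖ / Real.log (l + ‖w‖ ^ 2)) ∧
       ((π / 2 ≤ Complex.arg w ∧ Complex.arg w ≤ π - phi0 l w) →
        ‖Dhat κ η l w - D2 κ η w‖ <
          C * ‖D2 κ η w‖ / Real.log (l + ‖w‖ ^ 2))) := by
  obtain ⟨l₀, hl₀, C, hC, h⟩ := stmt6_general κ η hκ hη
  exact ⟨l₀, hl₀, C, hC, fun l hl w hw => ⟨fun hφ => (h l hl w hw).1 ⟨hφ.1.le, hφ.2.le⟩,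
    fun hφ => (h l hl w hw).2 ⟨by linarith [hφ.1, hφ.2], hφ.2⟩⟩⟩
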